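/- Let F be a Ferrers diagram of semiperimeter n+1. For c ∈ Rec_min(G(F)), define the filling φ_CT(c) of F by putting, in each cell (i,j) of F (i ∈ rows(F), j ∈ cols(F)), the entry 1 if i lies in an earlier block than j in CanonTop(c), and 0 if j lies in an earlier block than i. Then φ_CT(c) is a EW-tableau on F, and the maps φ_CT : Rec_min(G(F)) → EWtab(F) and φ_TC : EWtab(F) → Rec_min(G(F)) are mutually inverse bijections. -/

import Mathlib

open Classical

/-- A Ferrers diagram of semiperimeter `n + 1`, encoded by the set of its row labels
(labels `0, …, n` run along the south-east border; `0` labels the top row and the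
last label `n` is a column label). -/
structure Ferrers (n : ℕ) where
  rows : Finset (Fin (n + 1))
  zero_mem : 0 ∈ rows
  last_not_mem : Fin.last n ∉ rows

namespace Ferrers

/-- `(i, j)` is a cell of the diagram: `i` is a row label, `j` a column label, `i < j`. -/
def Cell {n : ℕ} (F : Ferrers n) (i j : Fin (n + 1)) : Prop :=
  i ∈ F.rows ∧ j ∉ F.rows ∧ i < j

/-- Adjacency in the Ferrers graph `G(F)`. -/
def Adj {n : ℕ} (F : Ferrers n) (u v : Fin (n + 1)) : Prop :=
  F.Cell u v ∨ F.Cell v u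

/-- Degree of a vertex in `G(F)`. -/
noncomputable def deg {n : ℕ} (F : Ferrers n) (v : Fin (n + 1)) : ℕ :=
  {u | F.Adj v u}.ncard

/-- Toppling a single vertex.  The height at the sink `0` is kept equal to `c 0`
(grains sent to the sink vanish); toppling the sink sends one grain to each of
its neighbours. -/
noncomputable def topple {n : ℕ} (F : Ferrers n) (c : Fin (n + 1) → ℕ)
    (v : Fin (n + 1)) : Fin (n + 1) → ℕ :=
  fun u =>
    if u = 0 then c 0
    else if u = v then c v - F.deg v
    else if F.Adj v u then c u + 1
    else c u

/-- Toppling the vertices of a list in order. -/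
noncomputable def toppleList {n : ℕ} (F : Ferrers n) (c : Fin (n + 1) → ℕ)
    (l : List (Fin (n + 1))) : Fin (n + 1) → ℕ :=
  l.foldl F.topple c

/-- Simultaneous toppling of a set of vertices. -/
noncomputable def toppleSet {n : ℕ} (F : Ferrers n) (c : Fin (n + 1) → ℕ)
    (S : Set (Fin (n + 1))) : Fin (n + 1) → ℕ :=
  fun u =>
    if u = 0 then c 0
    else c u + {w ∈ S | F.Adj w u}.ncard - if u ∈ S then F.deg u else 0

/-- A configuration is stable if every non-sink vertex has fewer grains than its degree. -/
def Stable {n : ℕ} (F : Ferrers n) (c : Fin (n + 1) → ℕ) : Prop :=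
  ∀ v, v ≠ 0 → c v < F.deg v

/-- A Dhar (burning) ordering for `c`: an ordering `v₀ = 0, v₁, …, vₙ` of all the
vertices such that each `vᵢ` (`i ≥ 1`) is unstable after toppling `v₀, …, v_{i-1}`. -/
def DharSeq {n : ℕ} (F : Ferrers n) (c : Fin (n + 1) → ℕ) (l : List (Fin (n + 1))) : Prop :=
  l.length = n + 1 ∧ l.Nodup ∧ l.head? = some 0 ∧
    ∀ i, ∀ h : i < l.length, 1 ≤ i →
      F.deg (l.get ⟨i, h⟩) ≤ F.toppleList c (l.take i) (l.get ⟨i, h⟩)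

/-- Recurrent configurations (via Dhar's criterion).  The height at the sink is
normalised to `0`. -/
def Recurrent {n : ℕ} (F : Ferrers n) (c : Fin (n + 1) → ℕ) : Prop :=
  c 0 = 0 ∧ F.Stable c ∧ ∃ l, F.DharSeq c l

/-- Minimal recurrent configurations: recurrent with minimal total number of grains. -/
def RecMin {n : ℕ} (F : Ferrers n) (c : Fin (n + 1) → ℕ) : Prop :=
  F.Recurrent c ∧ ∀ c', F.Recurrent c' → (∑ v, c v) ≤ ∑ v, c' v

/-- Canonical toppling: block `0` is `{0}` (the sink); from then on, blocks with odd
index are the sets of currently unstable column vertices and blocks with even index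
the sets of currently unstable row vertices.  The first component is the configuration
just before toppling the block recorded in the second component. -/
noncomputable def canonAux {n : ℕ} (F : Ferrers n) (c : Fin (n + 1) → ℕ) :
    ℕ → ((Fin (n + 1) → ℕ) × Set (Fin (n + 1)))
  | 0 => (c, {0})
  | k + 1 =>
    let c' := F.toppleSet (canonAux F c k).1 (canonAux F c k).2
    (c', {v | v ≠ 0 ∧ (if k % 2 = 0 then v ∉ F.rows else v ∈ F.rows) ∧ F.deg v ≤ c' v})

/-- The `k`-th block of the canonical toppling of `c`:
`canonTop F c 0 = U⁰ = {0}`, `canonTop F c (2i-1) = Vⁱ`, `canonTop F c (2i) = Uⁱ`. -/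
noncomputable def canonTop {n : ℕ} (F : Ferrers n) (c : Fin (n + 1) → ℕ) (k : ℕ) :
    Set (Fin (n + 1)) :=
  (F.canonAux c k).2

/-- The configuration just before toppling the `k`-th block of the canonical toppling. -/
noncomputable def canonConfig {n : ℕ} (F : Ferrers n) (c : Fin (n + 1) → ℕ) (k : ℕ) :
    Fin (n + 1) → ℕ :=
  (F.canonAux c k).1

/-- The index of the block of the canonical toppling of `c` containing `v`. -/
noncomputable def bIdx {n : ℕ} (F : Ferrers n) (c : Fin (n + 1) → ℕ) (v : Fin (n + 1)) : ℕ :=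
  sInf {k | v ∈ F.canonTop c k}

/-- `T` is a EW-tableau on `F` (entries of non-cells are normalised to `false`):
the top row contains only `1`s, every other row contains a `0`, and there is no
rectangle with two diagonally opposite `0`s and two `1`s in the other corners. -/
def IsEW {n : ℕ} (F : Ferrers n) (T : Fin (n + 1) → Fin (n + 1) → Bool) : Prop :=
  (∀ i j, ¬F.Cell i j → T i j = false) ∧
  (∀ j, F.Cell 0 j → T 0 j = true) ∧
  (∀ i, i ∈ F.rows → i ≠ 0 → ∃ j, F.Cell i j ∧ T i j = false) ∧
  (∀ i i' j j', F.Cell i j → F.Cell i j' → F.Cell i' j → F.Cell i' j' →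
    T i j = T i' j' → T i j' = T i' j → T i j = T i j')

/-- The configuration associated to a tableau: row vertices count the `1`s in their
row, column vertices count the `0`s in their column (the sink is normalised to `0`). -/
noncomputable def phiTC {n : ℕ} (F : Ferrers n) (T : Fin (n + 1) → Fin (n + 1) → Bool) :
    Fin (n + 1) → ℕ :=
  fun v =>
    if v = 0 then 0
    else if v ∈ F.rows then {j | F.Cell v j ∧ T v j = true}.ncard
    else {i | F.Cell i v ∧ T i v = false}.ncard

/-- The tableau associated to a (minimal recurrent) configuration: a cell `(i, j)`
gets a `1` exactly when `i` lies in an earlier block than `j` in the canonical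
toppling of `c`. -/
noncomputable def phiCT {n : ℕ} (F : Ferrers n) (c : Fin (n + 1) → ℕ) :
    Fin (n + 1) → Fin (n + 1) → Bool :=
  fun i j => if F.Cell i j ∧ F.bIdx c i < F.bIdx c j then true else false

/-- The supplementary tableau of `T`: `S i j = 1` exactly when the row vertex `i`
lies in an earlier block than the column vertex `j` in `CanonTop (φ_TC T)`. -/
noncomputable def suppS {n : ℕ} (F : Ferrers n) (T : Fin (n + 1) → Fin (n + 1) → Bool)
    (i j : Fin (n + 1)) : Bool :=
  if F.bIdx (F.phiTC T) i < F.bIdx (F.phiTC T) j then true else false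

/-- The entry of `T` in cell `(j, k)` is a cornersupport entry. -/
def Cornersupport {n : ℕ} (F : Ferrers n) (T : Fin (n + 1) → Fin (n + 1) → Bool)
    (j k : Fin (n + 1)) : Prop :=
  ∃ j' k', j' ∈ F.rows ∧ k' ∉ F.rows ∧ j' ≠ j ∧ k' ≠ k ∧
    F.suppS T j' k' = !(T j k) ∧ F.suppS T j' k = T j k ∧ F.suppS T j k' = T j k

/-- `ν_v(T)`: the number of non-cornersupport `0`s in row `v` (if `v` is a row label),
resp. non-cornersupport `1`s in column `v` (if `v` is a column label). -/
noncomputable def nu {n : ℕ} (F : Ferrers n) (T : Fin (n + 1) → Fin (n + 1) → Bool)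
    (v : Fin (n + 1)) : ℕ :=
  if v ∈ F.rows then {k | F.Cell v k ∧ T v k = false ∧ ¬F.Cornersupport T v k}.ncard
  else {i | F.Cell i v ∧ T i v = true ∧ ¬F.Cornersupport T i v}.ncard

/-- `μ_v(c)`: if `v ∈ Uⁱ`, the number of `k ∈ Vⁱ` with `k > v`; if `v ∈ Vⁱ`,
the number of `k ∈ U^{i-1}` with `k < v`.  In both cases the relevant block is the
one immediately preceding the block of `v`. -/
noncomputable def mu {n : ℕ} (F : Ferrers n) (c : Fin (n + 1) → ℕ) (v : Fin (n + 1)) : ℕ :=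
  if v ∈ F.rows then {k | v < k ∧ k ∈ F.canonTop c (F.bIdx c v - 1)}.ncard
  else {k | k < v ∧ k ∈ F.canonTop c (F.bIdx c v - 1)}.ncard

/-- The minimal recurrent configuration with the same canonical toppling as `c`:
if `j ∈ Uⁱ` then `minrec c j = |{ℓ ∈ Vᵏ : j < ℓ, k > i}|`, and if `j ∈ Vⁱ` then
`minrec c j = |{ℓ ∈ Uᵏ : ℓ < j, k ≥ i}|` (blocks `Vᵏ` sit at odd index `2k - 1`,
blocks `Uᵏ` at even index `2k`). -/
noncomputable def minrecFun {n : ℕ} (F : Ferrers n) (c : Fin (n + 1) → ℕ) :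
    Fin (n + 1) → ℕ :=
  fun j =>
    if j = 0 then 0
    else if j ∈ F.rows then
      {l | j < l ∧ ∃ k, F.bIdx c j < 2 * k + 1 ∧ l ∈ F.canonTop c (2 * k + 1)}.ncard
    else
      {l | l < j ∧ ∃ k, F.bIdx c j < 2 * k ∧ l ∈ F.canonTop c (2 * k)}.ncard

/-- The number of edges of `G(F)` (equivalently, the number of cells of `F`). -/
noncomputable def edgeCount {n : ℕ} (F : Ferrers n) : ℕ :=
  {p : Fin (n + 1) × Fin (n + 1) | F.Cell p.1 p.2}.ncard

end Ferrers

/-!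
A tableau `T` orients the Ferrers graph: a `1` in cell `(i, j)` stands for `i → j`, a `0` for
`j → i`. Then `φ_TC T` lists the outdegrees away from the sink, and `T` is a EW-tableau exactly
when the orientation is acyclic with the sink as unique source; rectangles suffice to detect cycles
because in a Ferrers graph a directed cycle shortens to one of length four. On the other side,
orienting each edge from the earlier to the later block of the canonical toppling of a recurrent `c`
gives such an orientation, with outdegrees at most `c`. As all orientations of a graph have the same
total outdegree, the minimal recurrent configurations are precisely the outdegree sequences, and an
acyclic orientation is determined by its outdegrees.
-/

section Orientation

variable {V : Type*} {G : SimpleGraph V} {s : V} {R R' : V → V → Prop}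

/-- An orientation of the graph `G`, as a relation: `R u v` means that the edge `uv` points from
`u` to `v`. -/
structure IsOrientation (G : SimpleGraph V) (R : V → V → Prop) : Prop where
  adj_iff : ∀ {u v}, G.Adj u v ↔ R u v ∨ R v u
  asymm : ∀ {u v}, R u v → ¬R v u

/-- An acyclic orientation of `G` with unique source `s`. Acyclicity is expressed as
well-foundedness, which is equivalent to it on finite graphs. -/
structure IsRootedAcyclic (G : SimpleGraph V) (s : V) (R : V → V → Prop) : Prop
    extends IsOrientation G R where
  wellFounded : WellFounded R
  exists_rel_iff : ∀ {v}, (∃ u, R u v) ↔ v ≠ s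

/-- The outdegree of a vertex of a directed graph. -/
noncomputable def outdeg (R : V → V → Prop) (v : V) : ℕ :=
  {w | R v w}.ncard

/-- The indegree of a vertex of a directed graph. -/
noncomputable def indeg (R : V → V → Prop) (v : V) : ℕ :=
  {u | R u v}.ncard

/-- The sequence of outdegrees of a directed graph, as a sandpile configuration with sink `s`: the
height at `s` is set to `0`. -/
noncomputable def outdegConfig (s : V) (R : V → V → Prop) : V → ℕ :=
  Function.update (outdeg R) s 0

theorem outdegConfig_self : outdegConfig s R s = 0 :=
  Function.update_self ..

theorem outdegConfig_of_ne {v : V} (hv : v ≠ s) : outdegConfig s R v = outdeg R v :=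
  Function.update_of_ne hv ..

theorem sum_indeg_eq_sum_outdeg [Fintype V] (R : V → V → Prop) :
    ∑ v, indeg R v = ∑ v, outdeg R v := by
  simpa [Finset.bipartiteAbove, Finset.bipartiteBelow, indeg, outdeg, Set.ncard_eq_toFinset_card']
    using (Finset.sum_card_bipartiteAbove_eq_sum_card_bipartiteBelow
      (s := Finset.univ) (t := Finset.univ) R).symm

theorem exists_topologicalSort_of_wellFounded [Finite V] (hR : WellFounded R) :
    ∃ l : List V, l.Nodup ∧ (∀ v, v ∈ l) ∧ l.Pairwise fun u v => ¬R v u := by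
  cases nonempty_fintype V
  suffices h : ∀ S : Finset V, ∃ l : List V,
      l.Nodup ∧ (∀ v, v ∈ l ↔ v ∈ S) ∧ l.Pairwise fun u v => ¬R v u by
    obtain ⟨l, hnodup, hmem, hsorted⟩ := h Finset.univ
    exact ⟨l, hnodup, fun v => (hmem v).2 (Finset.mem_univ v), hsorted⟩
  intro S
  induction S using Finset.strongInduction with
  | _ S ih =>
  rcases S.eq_empty_or_nonempty with rfl | hS
  · exact ⟨[], by simp⟩
  obtain ⟨m, hm, hmin⟩ := hR.has_min (S : Set V) hS
  obtain ⟨l, hnodup, hmem, hsorted⟩ := ih _ (Finset.erase_ssubset hm)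
  refine ⟨m :: l, List.nodup_cons.2 ⟨by simp [hmem], hnodup⟩, fun v => ?_,
    List.pairwise_cons.2 ⟨fun v hv => hmin v (Finset.mem_of_mem_erase ((hmem v).1 hv)), hsorted⟩⟩
  by_cases hv : v = m
  · simpa [hv] using hm
  · simp [hmem, hv]

namespace IsOrientation

theorem adj (hR : IsOrientation G R) {u v : V} (h : R u v) : G.Adj u v :=
  hR.adj_iff.2 (Or.inl h)

theorem outdeg_add_indeg [Finite V] (hR : IsOrientation G R) (v : V) :
    outdeg R v + indeg R v = (G.neighborSet v).ncard := by
  have hdisj : Disjoint {w | R v w} {u | R u v} :=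
    Set.disjoint_left.2 fun _ h => hR.asymm h
  rw [outdeg, indeg, ← Set.ncard_union_eq hdisj]
  congr 1
  ext w
  exact hR.adj_iff.symm

theorem sum_outdeg [Fintype V] (hR : IsOrientation G R) :
    ∑ v, outdeg R v = G.edgeFinset.card := by
  have hdegree : ∀ v, outdeg R v + indeg R v = G.degree v := fun v =>
    (hR.outdeg_add_indeg v).trans (Set.ncard_eq_toFinset_card' _)
  have hsum : ∑ v, outdeg R v + ∑ v, indeg R v = 2 * G.edgeFinset.card := by
    rw [← Finset.sum_add_distrib, ← G.sum_degrees_eq_twice_card_edges]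
    exact Finset.sum_congr rfl fun v _ => hdegree v
  rw [sum_indeg_eq_sum_outdeg] at hsum
  omega

theorem eq_of_outdeg_eq [Finite V] (hR : IsOrientation G R) (hwf : WellFounded R)
    (hR' : IsOrientation G R') (h : outdeg R = outdeg R') : R = R' := by
  suffices hpred : ∀ v, {u | R u v} = {u | R' u v} by
    ext u v
    exact Set.ext_iff.1 (hpred v) u
  intro v
  induction v using hwf.induction with
  | _ v ih =>
  refine Set.eq_of_subset_of_ncard_le (fun u huv => ?_) ?_
  · refine (hR'.adj_iff.1 (hR.adj huv)).resolve_right fun hvu => hR.asymm huv ?_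
    exact (Set.ext_iff.1 (ih u huv) v).2 hvu
  · change indeg R' v ≤ indeg R v
    have hdeg := hR.outdeg_add_indeg v
    have hdeg' := hR'.outdeg_add_indeg v
    rw [h] at hdeg
    omega

end IsOrientation

namespace IsRootedAcyclic

theorem outdeg_root [Finite V] (hR : IsRootedAcyclic G s R) :
    outdeg R s = (G.neighborSet s).ncard := by
  have hindeg : indeg R s = 0 := by
    rw [indeg, Set.ncard_eq_zero]
    exact Set.eq_empty_of_forall_notMem fun u hu => hR.exists_rel_iff.1 ⟨u, hu⟩ rfl
  rw [← hR.outdeg_add_indeg, hindeg, Nat.add_zero]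

theorem outdeg_lt [Finite V] (hR : IsRootedAcyclic G s R) {v : V} (hv : v ≠ s) :
    outdeg R v < (G.neighborSet v).ncard := by
  rw [← hR.outdeg_add_indeg]
  exact Nat.lt_add_of_pos_right ((Set.ncard_pos).2 (hR.exists_rel_iff.2 hv))

theorem sum_outdegConfig [Fintype V] (hR : IsRootedAcyclic G s R) :
    ∑ v, outdegConfig s R v + (G.neighborSet s).ncard = G.edgeFinset.card := by
  rw [← hR.sum_outdeg, ← hR.outdeg_root, outdegConfig,
    Finset.sum_update_of_mem (Finset.mem_univ s), zero_add,
    ← Finset.sum_sdiff (Finset.subset_univ {s}), Finset.sum_singleton]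

theorem eq_of_outdegConfig_eq [Finite V] (hR : IsRootedAcyclic G s R)
    (hR' : IsRootedAcyclic G s R') (h : outdegConfig s R = outdegConfig s R') : R = R' := by
  refine hR.eq_of_outdeg_eq hR.wellFounded hR'.toIsOrientation (funext fun v => ?_)
  by_cases hv : v = s
  · rw [hv, hR.outdeg_root, hR'.outdeg_root]
  · rw [← outdegConfig_of_ne hv, h, outdegConfig_of_ne hv]

end IsRootedAcyclic

end Orientation

namespace Ferrers

variable {n : ℕ} {F : Ferrers n} {c : Fin (n + 1) → ℕ} {u v : Fin (n + 1)} {k : ℕ}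
  {R : Fin (n + 1) → Fin (n + 1) → Prop} {T : Fin (n + 1) → Fin (n + 1) → Bool}

/-- The Ferrers graph `G(F)`. -/
def graph (F : Ferrers n) : SimpleGraph (Fin (n + 1)) where
  Adj := F.Adj
  symm := ⟨fun _ _ => Or.symm⟩
  loopless := ⟨fun _ h => h.elim (fun h => lt_irrefl _ h.2.2) fun h => lt_irrefl _ h.2.2⟩

/-- The number of neighbours of `v` in `S`, that is, the number of grains that `v` receives when
every vertex of `S` topples once. -/
noncomputable def degIn (F : Ferrers n) (S : Set (Fin (n + 1))) (v : Fin (n + 1)) : ℕ :=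
  {w ∈ S | F.Adj w v}.ncard

theorem Adj.symm (h : F.Adj u v) : F.Adj v u :=
  Or.symm h

theorem Adj.mem_rows_iff_notMem_rows (h : F.Adj u v) : u ∈ F.rows ↔ v ∉ F.rows := by
  rcases h with ⟨hu, hv, -⟩ | ⟨hv, hu, -⟩
  · exact iff_of_true hu hv
  · exact iff_of_false hu (not_not_intro hv)

theorem degIn_mono {S S' : Set (Fin (n + 1))} (h : S ⊆ S') : F.degIn S v ≤ F.degIn S' v :=
  Set.ncard_le_ncard fun _ hw => ⟨h hw.1, hw.2⟩

theorem degIn_le_deg (S : Set (Fin (n + 1))) (v : Fin (n + 1)) : F.degIn S v ≤ F.deg v :=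
  Set.ncard_le_ncard fun _ hw => hw.2.symm

theorem degIn_union {S S' : Set (Fin (n + 1))} (h : Disjoint S S') :
    F.degIn (S ∪ S') v = F.degIn S v + F.degIn S' v := by
  rw [degIn, degIn, degIn, ← Set.ncard_union_eq (h.mono (Set.sep_subset ..) (Set.sep_subset ..))]
  congr 1
  ext w
  exact or_and_right

/-! ### Burning orders -/

theorem toppleList_apply_of_notMem (hv : v ≠ 0) {l : List (Fin (n + 1))} (hvl : v ∉ l) :
    F.toppleList c l v = c v + l.countP (F.Adj · v) := by
  induction l generalizing c with
  | nil => rfl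
  | cons a l ih =>
    rw [List.mem_cons, not_or] at hvl
    change F.toppleList (F.topple c a) l v = _
    rw [ih hvl.2, List.countP_cons]
    by_cases ha : F.Adj a v
    · simp only [topple, if_neg hv, if_neg hvl.1, ha, if_true, decide_true]
      ring
    · simp [topple, hv, hvl.1, ha]

theorem countP_adj_eq_degIn {l : List (Fin (n + 1))} (hl : l.Nodup) (v : Fin (n + 1)) :
    l.countP (F.Adj · v) = F.degIn {w | w ∈ l} v := by
  have hset : {w ∈ {w | w ∈ l} | F.Adj w v} = ((l.filter (F.Adj · v)).toFinset : Set _) := by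
    ext w
    simp
  rw [degIn, hset, Set.ncard_coe_finset, List.toFinset_card_of_nodup (hl.filter _),
    List.countP_eq_length_filter]

theorem toppleList_take_getElem {l : List (Fin (n + 1))} (hl : l.Nodup) {i : ℕ}
    (hi : i < l.length) (hne : l[i] ≠ 0) :
    F.toppleList c (l.take i) l[i] = c l[i] + F.degIn {w | w ∈ l.take i} l[i] := by
  have hnotMem : l[i] ∉ l.take i := fun h => by
    obtain ⟨j, hj, hji⟩ := List.mem_take_iff_getElem.1 h
    have := hl.getElem_inj_iff.1 hji
    omega
  rw [toppleList_apply_of_notMem hne hnotMem, countP_adj_eq_degIn (hl.sublist (l.take_sublist i))]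

theorem recurrent_of_outdegConfig_le (hR : IsRootedAcyclic F.graph 0 R) (h0 : c 0 = 0)
    (hs : F.Stable c) (hle : outdegConfig 0 R ≤ c) : F.Recurrent c := by
  obtain ⟨l, hnodup, hmem, hsorted⟩ := exists_topologicalSort_of_wellFounded hR.wellFounded
  have hlength : l.length = n + 1 := by
    have huniv : l.toFinset = Finset.univ := Finset.eq_univ_of_forall (by simpa using hmem)
    rw [← List.toFinset_card_of_nodup hnodup, huniv, Finset.card_univ, Fintype.card_fin]
  have hlt : ∀ {i j : ℕ} (hi : i < l.length) (hj : j < l.length), R l[i] l[j] → i < j := by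
    intro i j hi hj hij
    by_contra! hji
    rcases hji.lt_or_eq with hji | rfl
    · exact List.pairwise_iff_getElem.1 hsorted j i hj hi hji hij
    · exact hR.asymm hij hij
  have hhead : l[0] = 0 := by
    by_contra hne
    obtain ⟨u, hu⟩ := hR.exists_rel_iff.2 hne
    obtain ⟨i, hi, rfl⟩ := List.getElem_of_mem (hmem u)
    exact absurd (hlt hi _ hu) i.not_lt_zero
  refine ⟨h0, hs, l, hlength, hnodup, by simp [List.head?_eq_getElem?, hlength, hhead],
    fun i hi hpos => ?_⟩
  have hne : l[i] ≠ 0 := fun h => by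
    have := hnodup.getElem_inj_iff.1 (h.trans hhead.symm)
    omega
  have hindeg : indeg R l[i] ≤ F.degIn {w | w ∈ l.take i} l[i] := by
    refine Set.ncard_le_ncard fun u hu => ⟨?_, hR.adj hu⟩
    obtain ⟨j, hj, rfl⟩ := List.getElem_of_mem (hmem u)
    exact List.mem_take_iff_getElem.2 ⟨j, lt_min (hlt hj hi hu) hj, rfl⟩
  rw [List.get_eq_getElem, toppleList_take_getElem hnodup hi hne]
  calc F.deg l[i] = outdeg R l[i] + indeg R l[i] := (hR.outdeg_add_indeg _).symm
    _ ≤ c l[i] + F.degIn {w | w ∈ l.take i} l[i] :=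
      Nat.add_le_add (outdegConfig_of_ne hne ▸ hle l[i]) hindeg

theorem Recurrent.mem_of_forall_deg_le (h : F.Recurrent c) {S : Set (Fin (n + 1))} (h0 : 0 ∈ S)
    (hS : ∀ v, v ≠ 0 → F.deg v ≤ c v + F.degIn S v → v ∈ S) (v : Fin (n + 1)) : v ∈ S := by
  obtain ⟨-, -, l, hlength, hnodup, hhead, hburn⟩ := h
  have hmem : v ∈ l := by
    rw [← List.mem_toFinset, Finset.eq_univ_of_card l.toFinset
      (by rw [List.toFinset_card_of_nodup hnodup, hlength, Fintype.card_fin])]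
    exact Finset.mem_univ v
  obtain ⟨i, hi, rfl⟩ := List.getElem_of_mem hmem
  clear hmem
  induction i using Nat.strong_induction_on with
  | _ i ih =>
  by_cases hne : l[i] = 0
  · rwa [hne]
  have hpos : 1 ≤ i := Nat.one_le_iff_ne_zero.2 fun hi0 => hne <| by
    subst hi0
    simpa [List.head?_eq_getElem?, hlength] using hhead
  have hsub : {w | w ∈ l.take i} ⊆ S := fun w hw => by
    obtain ⟨j, hj, rfl⟩ := List.mem_take_iff_getElem.1 hw
    exact ih j (by omega) (by omega)
  have hdeg := hburn i hi hpos
  rw [List.get_eq_getElem, toppleList_take_getElem hnodup hi hne] at hdeg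
  exact hS _ hne (hdeg.trans (Nat.add_le_add_left (degIn_mono hsub) _))

/-! ### The canonical toppling -/

/-- The vertices toppled before the `k`-th block of the canonical toppling. -/
def toppledBefore (F : Ferrers n) (c : Fin (n + 1) → ℕ) (k : ℕ) : Set (Fin (n + 1)) :=
  ⋃ m < k, F.canonTop c m

theorem mem_toppledBefore : v ∈ F.toppledBefore c k ↔ ∃ m < k, v ∈ F.canonTop c m := by
  simp [toppledBefore]

theorem toppledBefore_succ :
    F.toppledBefore c (k + 1) = F.toppledBefore c k ∪ F.canonTop c k :=
  Set.biUnion_lt_succ ..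

theorem mem_canonTop_zero : v ∈ F.canonTop c 0 ↔ v = 0 :=
  Iff.rfl

theorem mem_canonTop_succ : v ∈ F.canonTop c (k + 1) ↔
    v ≠ 0 ∧ (v ∈ F.rows ↔ Even (k + 1)) ∧ F.deg v ≤ F.canonConfig c (k + 1) v := by
  have hparity : (if k % 2 = 0 then v ∉ F.rows else v ∈ F.rows) ↔ (v ∈ F.rows ↔ Even (k + 1)) := by
    split_ifs with hk <;> simp [Nat.even_add_one, Nat.even_iff, hk]
  rw [← hparity]
  rfl

theorem mem_rows_iff_even_of_mem_canonTop (h : v ∈ F.canonTop c k) : v ∈ F.rows ↔ Even k := by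
  cases k with
  | zero => simp [mem_canonTop_zero.1 h, F.zero_mem]
  | succ k => exact (mem_canonTop_succ.1 h).2.1

theorem deg_le_of_mem_canonTop (hv : v ≠ 0) (h : v ∈ F.canonTop c k) :
    F.deg v ≤ F.canonConfig c k v := by
  cases k with
  | zero => exact absurd (mem_canonTop_zero.1 h) hv
  | succ k => exact (mem_canonTop_succ.1 h).2.2

theorem canonConfig_succ_apply (hv : v ≠ 0) : F.canonConfig c (k + 1) v =
    F.canonConfig c k v + F.degIn (F.canonTop c k) v -
      if v ∈ F.canonTop c k then F.deg v else 0 :=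
  if_neg hv

/-- A toppled vertex has lost as many grains as it has neighbours, so it would need a grain from
each of them, and one more, to topple again. -/
theorem Stable.canonConfig_add_and_disjoint (hs : F.Stable c) (k : ℕ) :
    (∀ v, v ≠ 0 → F.canonConfig c k v + (if v ∈ F.toppledBefore c k then F.deg v else 0) =
      c v + F.degIn (F.toppledBefore c k) v) ∧
    Disjoint (F.toppledBefore c k) (F.canonTop c k) := by
  induction k with
  | zero => simp [toppledBefore, canonConfig, canonAux, degIn]
  | succ k ih =>
    obtain ⟨hconfig, hdisj⟩ := ih
    have hconfig_succ : ∀ v, v ≠ 0 →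
        F.canonConfig c (k + 1) v + (if v ∈ F.toppledBefore c (k + 1) then F.deg v else 0) =
          c v + F.degIn (F.toppledBefore c (k + 1)) v := by
      intro v hv
      have hbalance := hconfig v hv
      rw [canonConfig_succ_apply hv, toppledBefore_succ, degIn_union hdisj, ← Nat.add_assoc,
        ← hbalance]
      by_cases hmem : v ∈ F.canonTop c k
      · have hdeg := deg_le_of_mem_canonTop hv hmem
        simp only [Set.mem_union, hmem, Set.disjoint_right.1 hdisj hmem, or_true, if_true, if_false]
        omega
      · simp only [Set.mem_union, hmem, or_false, if_false]
        omega
    refine ⟨hconfig_succ, Set.disjoint_left.2 fun v htoppled hv => ?_⟩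
    have hne := (mem_canonTop_succ.1 hv).1
    have hbalance := hconfig_succ v hne
    rw [if_pos htoppled] at hbalance
    have hstable := hs v hne
    have hunstable := deg_le_of_mem_canonTop hne hv
    have hreceived := degIn_le_deg (F := F) (F.toppledBefore c (k + 1)) v
    omega

theorem Stable.canonConfig_apply_of_notMem (hs : F.Stable c) (hv : v ≠ 0)
    (h : v ∉ F.toppledBefore c k) :
    F.canonConfig c k v = c v + F.degIn (F.toppledBefore c k) v := by
  simpa [h] using (hs.canonConfig_add_and_disjoint k).1 v hv

theorem Stable.notMem_toppledBefore (hs : F.Stable c) (h : v ∈ F.canonTop c k) :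
    v ∉ F.toppledBefore c k :=
  Set.disjoint_right.1 (hs.canonConfig_add_and_disjoint k).2 h

theorem Stable.mem_iUnion_canonTop_of_deg_le (hs : F.Stable c) (hv : v ≠ 0)
    (hdeg : F.deg v ≤ c v + F.degIn (⋃ k, F.canonTop c k) v) : v ∈ ⋃ k, F.canonTop c k := by
  have hfinal : ∀ᶠ k in Filter.atTop, ⋃ m, F.canonTop c m ⊆ F.toppledBefore c (k + 1) := by
    refine Filter.eventually_all.2 fun w => ?_
    by_cases hw : w ∈ ⋃ m, F.canonTop c m
    · obtain ⟨m, hm⟩ := Set.mem_iUnion.1 hw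
      filter_upwards [Filter.eventually_ge_atTop m] with k hk _
      exact mem_toppledBefore.2 ⟨m, Nat.lt_succ_of_le hk, hm⟩
    · exact Filter.Eventually.of_forall fun k hw' => absurd hw' hw
  have hparity : ∃ᶠ k in Filter.atTop, (v ∈ F.rows ↔ Even (k + 1)) := by
    by_cases hrow : v ∈ F.rows
    · exact Nat.frequently_odd.mono fun k hk => iff_of_true hrow hk.add_one
    · exact Nat.frequently_even.mono fun k hk =>
        iff_of_false hrow (Nat.not_even_iff_odd.2 hk.add_one)
  obtain ⟨k, hk, hsub⟩ := (hparity.and_eventually hfinal).exists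
  by_cases htoppled : v ∈ F.toppledBefore c (k + 1)
  · obtain ⟨m, -, hm⟩ := mem_toppledBefore.1 htoppled
    exact Set.mem_iUnion_of_mem m hm
  · refine Set.mem_iUnion_of_mem (k + 1) (mem_canonTop_succ.2 ⟨hv, hk, ?_⟩)
    rw [hs.canonConfig_apply_of_notMem hv htoppled]
    exact hdeg.trans (Nat.add_le_add_left (degIn_mono hsub) _)

theorem bIdx_zero : F.bIdx c 0 = 0 :=
  Nat.le_zero.1 (Nat.sInf_le (mem_canonTop_zero (F := F) (c := c).2 rfl))

namespace Recurrent

theorem mem_canonTop_bIdx (h : F.Recurrent c) (v : Fin (n + 1)) :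
    v ∈ F.canonTop c (F.bIdx c v) :=
  Nat.sInf_mem <| Set.mem_iUnion.1 <| h.mem_of_forall_deg_le
    (Set.mem_iUnion_of_mem 0 (mem_canonTop_zero.2 rfl))
    (fun _ => h.2.1.mem_iUnion_canonTop_of_deg_le) v

theorem toppledBefore_eq (h : F.Recurrent c) (k : ℕ) :
    F.toppledBefore c k = {w | F.bIdx c w < k} := by
  ext w
  rw [mem_toppledBefore]
  exact ⟨fun ⟨_, hm, hw⟩ => (Nat.sInf_le hw).trans_lt hm, fun hw => ⟨_, hw, h.mem_canonTop_bIdx w⟩⟩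

theorem bIdx_ne_of_adj (h : F.Recurrent c) (huv : F.Adj u v) : F.bIdx c u ≠ F.bIdx c v := by
  intro heq
  have hrows := huv.mem_rows_iff_notMem_rows
  rw [mem_rows_iff_even_of_mem_canonTop (h.mem_canonTop_bIdx u),
    mem_rows_iff_even_of_mem_canonTop (h.mem_canonTop_bIdx v), heq] at hrows
  exact iff_not_self hrows

end Recurrent

/-- The orientation of `G(F)` from earlier to later blocks of the canonical toppling. -/
def burnRel (F : Ferrers n) (c : Fin (n + 1) → ℕ) (u v : Fin (n + 1)) : Prop :=
  F.Adj u v ∧ F.bIdx c u < F.bIdx c v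

namespace Recurrent

theorem deg_le_add_indeg_burnRel (h : F.Recurrent c) (hv : v ≠ 0) :
    F.deg v ≤ c v + indeg (F.burnRel c) v := by
  have hmem := h.mem_canonTop_bIdx v
  have hindeg : F.degIn (F.toppledBefore c (F.bIdx c v)) v = indeg (F.burnRel c) v := by
    simp only [h.toppledBefore_eq, degIn, indeg, burnRel, Set.mem_ofPred_eq, and_comm]
  rw [← hindeg, ← h.2.1.canonConfig_apply_of_notMem hv (h.2.1.notMem_toppledBefore hmem)]
  exact deg_le_of_mem_canonTop hv hmem

theorem isRootedAcyclic_burnRel (h : F.Recurrent c) :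
    IsRootedAcyclic F.graph 0 (F.burnRel c) where
  adj_iff := ⟨fun huv => (h.bIdx_ne_of_adj huv).lt_or_gt.imp (⟨huv, ·⟩) (⟨huv.symm, ·⟩),
    fun huv => huv.elim And.left fun hvu => hvu.1.symm⟩
  asymm huv hvu := lt_asymm huv.2 hvu.2
  wellFounded := Subrelation.wf And.right (measure (F.bIdx c)).wf
  exists_rel_iff {v} := by
    refine ⟨?_, fun hv => (Set.ncard_pos (Set.toFinite _)).1 ?_⟩
    · rintro ⟨u, hu⟩ rfl
      exact absurd (bIdx_zero ▸ hu.2) (Nat.not_lt_zero _)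
    · have hindeg := h.deg_le_add_indeg_burnRel hv
      have hstable := h.2.1 v hv
      change 0 < indeg (F.burnRel c) v
      omega

theorem outdegConfig_burnRel_le (h : F.Recurrent c) : outdegConfig 0 (F.burnRel c) ≤ c := by
  intro v
  by_cases hv : v = 0
  · rw [hv, outdegConfig_self]
    exact Nat.zero_le _
  rw [outdegConfig_of_ne hv]
  have hdeg : outdeg (F.burnRel c) v + indeg (F.burnRel c) v = F.deg v :=
    h.isRootedAcyclic_burnRel.outdeg_add_indeg v
  exact Nat.le_of_add_le_add_right (hdeg.trans_le (h.deg_le_add_indeg_burnRel hv))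

end Recurrent

/-! ### Minimal recurrent configurations -/

theorem recurrent_outdegConfig (hR : IsRootedAcyclic F.graph 0 R) :
    F.Recurrent (outdegConfig 0 R) :=
  recurrent_of_outdegConfig_le hR outdegConfig_self
    (fun _ hv => (outdegConfig_of_ne hv).trans_lt (hR.outdeg_lt hv)) le_rfl

theorem recMin_outdegConfig (hR : IsRootedAcyclic F.graph 0 R) : F.RecMin (outdegConfig 0 R) := by
  refine ⟨recurrent_outdegConfig hR, fun c hc => ?_⟩
  have hsum := hR.sum_outdegConfig
  rw [← hc.isRootedAcyclic_burnRel.sum_outdegConfig] at hsum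
  rw [Nat.add_right_cancel hsum]
  exact Finset.sum_le_sum fun v _ => hc.outdegConfig_burnRel_le v

theorem RecMin.outdegConfig_burnRel (h : F.RecMin c) : outdegConfig 0 (F.burnRel c) = c := by
  have hle := h.1.outdegConfig_burnRel_le
  have hsum := h.2 _ (recurrent_outdegConfig h.1.isRootedAcyclic_burnRel)
  funext v
  exact (Finset.sum_eq_sum_iff_of_le fun v _ => hle v).1
    ((Finset.sum_le_sum fun v _ => hle v).antisymm hsum) v (Finset.mem_univ v)

theorem burnRel_outdegConfig (hR : IsRootedAcyclic F.graph 0 R) :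
    F.burnRel (outdegConfig 0 R) = R :=
  (recurrent_outdegConfig hR).isRootedAcyclic_burnRel.eq_of_outdegConfig_eq hR
    (recMin_outdegConfig hR).outdegConfig_burnRel

/-! ### Tableaux as orientations -/

theorem adj_of_adj_of_adj_of_adj {a w : Fin (n + 1)} (huv : F.Adj u v) (hvw : F.Adj v w)
    (hwa : F.Adj w a) (hav : a ≤ v) (haw : a ≤ w) : F.Adj a u := by
  obtain ⟨ha, hw, -⟩ : F.Cell a w := hwa.resolve_left fun h => haw.not_gt h.2.2
  have hv : v ∈ F.rows := hvw.mem_rows_iff_notMem_rows.2 hw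
  obtain ⟨-, hu, hlt⟩ : F.Cell v u := huv.resolve_left fun h => h.2.1 hv
  exact Or.inl ⟨ha, hu, hav.trans_lt hlt⟩

/-- Suppose every vertex of `S` has a predecessor in `S`, and let `a` be the smallest vertex of `S`.
Any directed path `u → v → w → a` in `S` closes up to a four-cycle of the graph, whose last edge
must then be `u → a`. So the vertices of `S` with a path of length one or two to `a` again have
predecessors among themselves, but they do not include `a`. -/
theorem wellFounded_of_forall_not_fourCycle (hR : IsOrientation F.graph R)
    (hcycle : ∀ a b c d, R a b → R b c → R c d → ¬R d a) : WellFounded R := by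
  suffices hempty : ∀ S : Finset (Fin (n + 1)), (∀ v ∈ S, ∃ u ∈ S, R u v) → S = ∅ by
    refine WellFounded.wellFounded_iff_has_min.2 fun S hS => ?_
    by_contra! hpred
    exact hS.ne_empty (Set.toFinset_eq_empty.1 (hempty S.toFinset (by simpa using hpred)))
  intro S
  induction S using Finset.strongInduction with
  | _ S ih =>
  intro hpred
  by_contra hne
  obtain ⟨a, haS, hmin⟩ : ∃ a, IsLeast (S : Set (Fin (n + 1))) a :=
    ⟨_, S.isLeast_min' (Finset.nonempty_iff_ne_empty.2 hne)⟩
  obtain ⟨b, hbS, hba⟩ := hpred a haS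
  let S' := S.filter fun v => R v a ∨ ∃ w ∈ S, R v w ∧ R w a
  have hbS' : b ∈ S' := Finset.mem_filter.2 ⟨hbS, Or.inl hba⟩
  have hssubset : S' ⊂ S := by
    refine Finset.filter_ssubset.2 ⟨a, haS, ?_⟩
    rintro (haa | ⟨w, -, haw, hwa⟩)
    exacts [hR.asymm haa haa, hR.asymm haw hwa]
  refine Finset.ne_empty_of_mem hbS' (ih S' hssubset fun v hv => ?_)
  obtain ⟨hvS, hva⟩ := Finset.mem_filter.1 hv
  obtain ⟨u, huS, huv⟩ := hpred v hvS
  refine ⟨u, Finset.mem_filter.2 ⟨huS, ?_⟩, huv⟩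
  rcases hva with hva | ⟨w, hwS, hvw, hwa⟩
  · exact Or.inr ⟨v, hvS, huv, hva⟩
  · have hau : F.graph.Adj a u :=
      adj_of_adj_of_adj_of_adj (hR.adj huv) (hR.adj hvw) (hR.adj hwa) (hmin hvS) (hmin hwS)
    exact Or.inl ((hR.adj_iff.1 hau).resolve_left (hcycle u v w a huv hvw hwa))

theorem wellFounded_iff_forall_not_fourCycle (hR : IsOrientation F.graph R) :
    WellFounded R ↔ ∀ a b c d, R a b → R b c → R c d → ¬R d a :=
  ⟨fun hwf a _ _ _ hab hbc hcd hda => hwf.transGen.irrefl.irrefl a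
      (.tail (.tail (.tail (.single hab) hbc) hcd) hda),
    wellFounded_of_forall_not_fourCycle hR⟩

/-- The orientation of `G(F)` given by a tableau: `1`s point from rows to columns and `0`s from
columns to rows. -/
def tableauRel (F : Ferrers n) (T : Fin (n + 1) → Fin (n + 1) → Bool) (u v : Fin (n + 1)) : Prop :=
  F.Cell u v ∧ T u v = true ∨ F.Cell v u ∧ T v u = false

theorem tableauRel_iff_of_mem_rows (hu : u ∈ F.rows) :
    F.tableauRel T u v ↔ F.Cell u v ∧ T u v = true :=
  or_iff_left fun h => h.1.2.1 hu

theorem tableauRel_iff_of_notMem_rows (hu : u ∉ F.rows) :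
    F.tableauRel T u v ↔ F.Cell v u ∧ T v u = false :=
  or_iff_right fun h => hu h.1.1

theorem isOrientation_tableauRel (F : Ferrers n) (T : Fin (n + 1) → Fin (n + 1) → Bool) :
    IsOrientation F.graph (F.tableauRel T) where
  adj_iff {u v} := by
    change F.Cell u v ∨ F.Cell v u ↔ _
    cases huv : T u v <;> cases hvu : T v u <;> simp [tableauRel, huv, hvu, or_comm]
  asymm {u v} := by
    by_cases hu : u ∈ F.rows
    · rw [tableauRel_iff_of_mem_rows hu]
      rintro ⟨huv, h1⟩ hvu
      rw [tableauRel_iff_of_notMem_rows huv.2.1, h1] at hvu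
      exact Bool.noConfusion hvu.2
    · rw [tableauRel_iff_of_notMem_rows hu]
      rintro ⟨hvu, h0⟩ h
      rw [tableauRel_iff_of_mem_rows hvu.1, h0] at h
      exact Bool.noConfusion h.2

theorem eq_of_tableauRel_eq {T' : Fin (n + 1) → Fin (n + 1) → Bool}
    (hT : ∀ i j, ¬F.Cell i j → T i j = false) (hT' : ∀ i j, ¬F.Cell i j → T' i j = false)
    (h : F.tableauRel T = F.tableauRel T') : T = T' := by
  funext i j
  by_cases hij : F.Cell i j
  · have hrel := congrFun₂ h i j
    rw [eq_iff_iff, tableauRel_iff_of_mem_rows hij.1, tableauRel_iff_of_mem_rows hij.1,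
      and_iff_right hij, and_iff_right hij] at hrel
    exact Bool.eq_iff_iff.2 hrel
  · rw [hT i j hij, hT' i j hij]

theorem forall_exists_tableauRel_iff :
    (∀ v, (∃ u, F.tableauRel T u v) ↔ v ≠ 0) ↔
      (∀ j, F.Cell 0 j → T 0 j = true) ∧
      ∀ i, i ∈ F.rows → i ≠ 0 → ∃ j, F.Cell i j ∧ T i j = false := by
  constructor
  · refine fun h => ⟨fun j hj => ?_, fun i hi hi0 => ?_⟩
    · by_contra h0
      exact (h 0).1 ⟨j, Or.inr ⟨hj, Bool.eq_false_iff.2 h0⟩⟩ rfl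
    · obtain ⟨j, hj⟩ := (h i).2 hi0
      exact ⟨j, hj.resolve_left fun hji => hji.1.2.1 hi⟩
  · refine fun ⟨htop, hrows⟩ v => ⟨?_, fun hv => ?_⟩
    · rintro ⟨u, ⟨hu, -⟩ | ⟨hu, h0⟩⟩ rfl
      · exact hu.2.1 F.zero_mem
      · exact Bool.noConfusion (h0.symm.trans (htop u hu))
    · by_cases hrow : v ∈ F.rows
      · obtain ⟨j, hj⟩ := hrows v hrow hv
        exact ⟨j, Or.inr hj⟩
      · have hcell : F.Cell 0 v := ⟨F.zero_mem, hrow, Fin.pos_of_ne_zero hv⟩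
        exact ⟨0, Or.inl ⟨hcell, htop v hcell⟩⟩

theorem forall_rectangle_iff_forall_not_fourCycle :
    (∀ i i' j j', F.Cell i j → F.Cell i j' → F.Cell i' j → F.Cell i' j' →
      T i j = T i' j' → T i j' = T i' j → T i j = T i j') ↔
    ∀ a b c d, F.tableauRel T a b → F.tableauRel T b c → F.tableauRel T c d →
      ¬F.tableauRel T d a := by
  constructor
  · intro hrect
    have hrow : ∀ i j i' j', i ∈ F.rows → F.tableauRel T i j → F.tableauRel T j i' →
        F.tableauRel T i' j' → ¬F.tableauRel T j' i := by
      intro i j i' j' hi hij hji' hij' hji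
      rw [tableauRel_iff_of_mem_rows hi] at hij
      rw [tableauRel_iff_of_notMem_rows hij.1.2.1] at hji'
      rw [tableauRel_iff_of_mem_rows hji'.1.1] at hij'
      rw [tableauRel_iff_of_notMem_rows hij'.1.2.1] at hji
      have := hrect i i' j j' hij.1 hji.1 hji'.1 hij'.1 (hij.2.trans hij'.2.symm)
        (hji.2.trans hji'.2.symm)
      rw [hij.2, hji.2] at this
      exact Bool.noConfusion this
    intro a b c d hab hbc hcd hda
    by_cases ha : a ∈ F.rows
    · exact hrow a b c d ha hab hbc hcd hda
    · rw [tableauRel_iff_of_notMem_rows ha] at hab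
      exact hrow b c d a hab.1.1 hbc hcd hda (Or.inr hab)
  · intro hcycle i i' j j' hij hij' hi'j hi'j' hdiag hanti
    by_contra hne
    cases hval : T i j <;> cases hval' : T i j' <;> rw [hval, hval'] at hne
    · exact hne rfl
    · exact hcycle i j' i' j (.inl ⟨hij', hval'⟩) (.inr ⟨hi'j', hdiag ▸ hval⟩)
        (.inl ⟨hi'j, hanti ▸ hval'⟩) (.inr ⟨hij, hval⟩)
    · exact hcycle i j i' j' (.inl ⟨hij, hval⟩) (.inr ⟨hi'j, hanti ▸ hval'⟩)
        (.inl ⟨hi'j', hdiag ▸ hval⟩) (.inr ⟨hij', hval'⟩)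
    · exact hne rfl

theorem isEW_iff_isRootedAcyclic_tableauRel :
    F.IsEW T ↔
      (∀ i j, ¬F.Cell i j → T i j = false) ∧ IsRootedAcyclic F.graph 0 (F.tableauRel T) := by
  have hR := isOrientation_tableauRel F T
  refine and_congr_right fun _ => ?_
  rw [forall_rectangle_iff_forall_not_fourCycle, ← wellFounded_iff_forall_not_fourCycle hR,
    ← and_assoc, ← forall_exists_tableauRel_iff]
  exact ⟨fun ⟨hsource, hwf⟩ => ⟨hR, hwf, hsource _⟩,
    fun h => ⟨fun _ => h.exists_rel_iff, h.wellFounded⟩⟩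

/-! ### The maps `φ_TC` and `φ_CT` -/

theorem phiTC_eq_outdegConfig (F : Ferrers n) (T : Fin (n + 1) → Fin (n + 1) → Bool) :
    F.phiTC T = outdegConfig 0 (F.tableauRel T) := by
  funext v
  by_cases hv : v = 0
  · simp [hv, phiTC, outdegConfig_self]
  · by_cases hrow : v ∈ F.rows <;>
      simp [outdegConfig_of_ne hv, outdeg, phiTC, hv, hrow, tableauRel_iff_of_mem_rows,
        tableauRel_iff_of_notMem_rows]

theorem phiCT_eq_false_of_not_cell {i j : Fin (n + 1)} (h : ¬F.Cell i j) : F.phiCT c i j = false :=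
  if_neg fun hij => h hij.1

theorem Recurrent.tableauRel_phiCT (h : F.Recurrent c) :
    F.tableauRel (F.phiCT c) = F.burnRel c := by
  have hcell : ∀ {i j}, F.Cell i j → (F.phiCT c i j = true ↔ F.bIdx c i < F.bIdx c j) :=
    fun hij => by simp [phiCT, hij]
  ext u v
  by_cases hu : u ∈ F.rows
  · rw [tableauRel_iff_of_mem_rows hu, and_congr_right hcell, burnRel, Adj,
      or_iff_left fun hvu => hvu.2.1 hu]
  · rw [tableauRel_iff_of_notMem_rows hu, burnRel, Adj, or_iff_right fun huv => hu huv.1]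
    refine and_congr_right fun hvu => ?_
    rw [← Bool.not_eq_true, hcell hvu, not_lt]
    exact (h.bIdx_ne_of_adj (.inr hvu)).le_iff_lt

end Ferrers

/-- For `c ∈ Rec_min(G(F))`, the filling `φ_CT c` (a cell `(i,j)`
gets a `1` iff `i` lies in an earlier block than `j` in `CanonTop c`) is a
EW-tableau, and `φ_CT : Rec_min(G(F)) → EWtab(F)` and `φ_TC : EWtab(F) → Rec_min(G(F))`
are mutually inverse bijections. -/
theorem phiCT_phiTC_mutually_inverse {n : ℕ} (F : Ferrers n) :
    (∀ c : Fin (n + 1) → ℕ, F.RecMin c → F.IsEW (F.phiCT c)) ∧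
    (∀ c : Fin (n + 1) → ℕ, F.RecMin c → F.phiTC (F.phiCT c) = c) ∧
    (∀ T : Fin (n + 1) → Fin (n + 1) → Bool, F.IsEW T →
      F.RecMin (F.phiTC T) ∧ F.phiCT (F.phiTC T) = T) := by
  refine ⟨fun c hc => ?_, fun c hc => ?_, fun T hT => ?_⟩
  · rw [Ferrers.isEW_iff_isRootedAcyclic_tableauRel, hc.1.tableauRel_phiCT]
    exact ⟨fun _ _ => Ferrers.phiCT_eq_false_of_not_cell, hc.1.isRootedAcyclic_burnRel⟩
  · rw [F.phiTC_eq_outdegConfig, hc.1.tableauRel_phiCT, hc.outdegConfig_burnRel]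
  · obtain ⟨hcells, hR⟩ := Ferrers.isEW_iff_isRootedAcyclic_tableauRel.1 hT
    rw [F.phiTC_eq_outdegConfig]
    refine ⟨Ferrers.recMin_outdegConfig hR, ?_⟩
    refine Ferrers.eq_of_tableauRel_eq (fun _ _ => Ferrers.phiCT_eq_false_of_not_cell) hcells ?_
    rw [(Ferrers.recurrent_outdegConfig hR).tableauRel_phiCT, Ferrers.burnRel_outdegConfig hR]
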